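/- There are no positive natural numbers m₁, n₁, m₂, n₂, m₃, n₃ such that ((m₂/n₂) : ℝ)^((m₃/n₃) : ℝ) · log(m₁/n₁) = 1, where ^ is the real power function and log is the real natural logarithm. -/

import Mathlib

/-! Writing an identity `∑ c_β exp β = 0` between algebraic numbers as an element `f ≠ 0` of the
group ring `L[L]` of a Galois number field `L` (coefficients and exponents both in `L`), one first
makes it Galois invariant. The group ring is a domain because `L` is torsion-free, so the product of
the conjugates of `f` is again nonzero; multiplying it by the conjugates of a suitable single
term gives a Galois-invariant relation whose coefficient at the exponent `0` is nonzero. Clearing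
denominators and replacing each `exp β` with `β ≠ 0` by Hermite's approximations `p g(β) / n`, for a
large prime `p ∤ n`, gives an integer that is nonzero modulo `p` but has absolute value less than
`1`. Hence there is no such identity, and in particular `exp` is transcendental at nonzero algebraic
numbers. If `u ^ r * log v = 1`, then `log v` is algebraic and nonzero, although its exponential `v`
is algebraic. -/

section Integrality

open Polynomial

lemma exists_algebraMap_eq_of_isIntegral_of_fixed {R K L : Type*} [CommRing R]
    [IsIntegrallyClosed R] [Field K] [Algebra R K] [IsFractionRing R K] [Field L] [Algebra K L]
    [Algebra R L] [IsScalarTower R K L] [IsGalois K L] {x : L} (hx : IsIntegral R x)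
    (hfix : ∀ σ : Gal(L/K), σ x = x) : ∃ y : R, algebraMap R L y = x := by
  obtain ⟨z, rfl⟩ := (InfiniteGalois.mem_range_algebraMap_iff_fixed x).2 hfix
  obtain ⟨y, rfl⟩ := IsIntegrallyClosed.isIntegral_iff.1
    ((isIntegral_algebraMap_iff (algebraMap K L).injective).1 hx)
  exact ⟨y, IsScalarTower.algebraMap_apply R K L y⟩

lemma isIntegral_pow_smul_aeval {R A : Type*} [CommRing R] [CommRing A] [Algebra R A] {d : R}
    {x : A} (hx : IsIntegral R (d • x)) {g : R[X]} {m : ℕ} (hm : g.natDegree ≤ m) :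
    IsIntegral R (d ^ m • aeval x g) := by
  rw [aeval_eq_sum_range, Finset.smul_sum]
  refine IsIntegral.sum _ fun i hi => ?_
  have him : m - i + i = m := by grind
  have hterm : d ^ m • g.coeff i • x ^ i = (d ^ (m - i) * g.coeff i) • (d • x) ^ i := by
    rw [_root_.smul_pow, smul_smul, smul_smul, ← him, Nat.add_sub_cancel, pow_add]
    congr 1
    ring
  rw [hterm]
  exact (hx.pow i).smul _

lemma map_aeval_int {R S : Type*} [Ring R] [Ring S] (φ : R →+* S) (x : R) (g : ℤ[X]) :
    φ (aeval x g) = aeval (φ x) g :=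
  (aeval_algHom_apply φ.toIntAlgHom x g).symm

lemma exists_coeff_zero_ne_zero_forall_aeval_eq_zero {R A : Type*} [CommRing R] [IsDomain R]
    [CommRing A] [Algebra R A] [Algebra.IsAlgebraic R A] (s : Finset A)
    (hs : ∀ x ∈ s, x ∈ nonZeroDivisors A) :
    ∃ P : R[X], P.coeff 0 ≠ 0 ∧ ∀ x ∈ s, aeval x P = 0 := by
  choose! Q hQ0 hQ using fun x hx =>
    (Algebra.IsAlgebraic.isAlgebraic (R := R) x).exists_nonzero_coeff_and_aeval_eq_zero (hs x hx)
  refine ⟨∏ x ∈ s, Q x, ?_, fun x hx => ?_⟩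
  · rw [coeff_zero_prod]
    exact Finset.prod_ne_zero_iff.2 hQ0
  · rw [map_prod]
    exact Finset.prod_eq_zero hx (hQ x hx)

end Integrality

section Approximation

open Polynomial Filter

lemma exists_exp_approx_lt {P : ℤ[X]} (hP : P.coeff 0 ≠ 0) (d : ℂ) {ε : ℝ} (hε : 0 < ε) (N : ℕ) :
    ∃ p : ℕ, p.Prime ∧ N < p ∧ ∃ n : ℤ, ¬ (p : ℤ) ∣ n ∧ ∃ (g : ℤ[X]) (m : ℕ), g.natDegree ≤ m ∧
      ∀ z ∈ P.aroots ℂ, ‖d ^ m * (n * Complex.exp z - p * aeval z g)‖ < ε := by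
  rw [coeff_zero_eq_eval_zero] at hP
  obtain ⟨c, hc⟩ := LindemannWeierstrass.exp_polynomial_approx P hP
  set b : ℝ := c * ‖d‖ ^ P.natDegree with hb
  have hlim : Tendsto (fun k : ℕ => b * (b ^ k / k.factorial)) atTop (nhds 0) := by
    simpa only [mul_zero] using (FloorSemiring.tendsto_pow_div_factorial_atTop b).const_mul b
  obtain ⟨k₀, hk₀⟩ := eventually_atTop.1 (hlim.eventually_lt_const hε)
  obtain ⟨p, hp_ge, hp⟩ := Nat.exists_infinite_primes (k₀ + (P.eval 0).natAbs + N + 1)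
  obtain ⟨n, hn, g, hg, happrox⟩ := hc p (by omega) hp
  refine ⟨p, hp, by omega, n, hn, g, p * P.natDegree, hg.trans (Nat.sub_le _ _), fun z hz => ?_⟩
  calc ‖d ^ (p * P.natDegree) * (n * Complex.exp z - p * aeval z g)‖
      = ‖d‖ ^ (p * P.natDegree) * ‖n • Complex.exp z - p • aeval z g‖ := by
        rw [norm_mul, norm_pow, zsmul_eq_mul, nsmul_eq_mul]
    _ ≤ ‖d‖ ^ (p * P.natDegree) * (c ^ p / (p - 1).factorial) := by gcongr; exact happrox hz
    _ = b ^ p / (p - 1).factorial := by rw [hb, mul_pow, ← pow_mul, mul_comm P.natDegree]; ring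
    _ = b * (b ^ (p - 1) / (p - 1).factorial) := by
        rw [← mul_div_assoc, ← pow_succ', Nat.sub_add_cancel hp.one_le]
    _ < ε := hk₀ (p - 1) (by omega)

lemma norm_sum_mul_lt_one {α R : Type*} [SeminormedRing R] {s : Finset α} {a e : α → R}
    (he : ∀ x ∈ s, ‖e x‖ ≤ 1 / ((∑ y ∈ s, ‖a y‖) + 1)) : ‖∑ x ∈ s, a x * e x‖ < 1 := by
  set B := ∑ y ∈ s, ‖a y‖
  have hB : 0 ≤ B := Finset.sum_nonneg fun _ _ => norm_nonneg _
  calc ‖∑ x ∈ s, a x * e x‖ ≤ ∑ x ∈ s, ‖a x‖ * ‖e x‖ :=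
        norm_sum_le_of_le s fun x _ => norm_mul_le _ _
    _ ≤ ∑ x ∈ s, ‖a x‖ * (1 / (B + 1)) := by gcongr with x hx; exact he x hx
    _ = B / (B + 1) := by rw [← Finset.sum_mul, mul_one_div]
    _ < 1 := (div_lt_one (add_pos_of_nonneg_of_pos hB one_pos)).2 (lt_add_one B)

lemma pow_mul_add_prime_mul_ne_zero {p : ℕ} (hp : p.Prime) {a b n : ℤ} (ha : a ≠ 0)
    (hap : a.natAbs < p) (hb : b ≠ 0) (hbp : b.natAbs < p) (hn : ¬ (p : ℤ) ∣ n) (m : ℕ) (w : ℤ) :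
    a ^ m * (n * b) + p * w ≠ 0 := by
  have hp' : Prime (p : ℤ) := Nat.prime_iff_prime_int.1 hp
  have hnot_dvd {z : ℤ} (hz : z ≠ 0) (hzp : z.natAbs < p) : ¬ (p : ℤ) ∣ z := fun h =>
    hz (Int.eq_zero_of_dvd_of_natAbs_lt_natAbs h hzp)
  intro h
  have hdvd : (p : ℤ) ∣ a ^ m * (n * b) := ⟨-w, by linarith⟩
  rcases hp'.dvd_or_dvd hdvd with h | h
  · exact hnot_dvd ha hap (hp'.dvd_of_dvd_pow h)
  · exact (hp'.dvd_or_dvd h).elim hn (hnot_dvd hb hbp)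

end Approximation

open AddMonoidAlgebra

section Twist

variable {K R : Type*} [CommSemiring K] [Semiring R] [Algebra K R]

/-- The conjugation action of algebra automorphisms on formal exponential sums: `σ` is applied to
the coefficients as well as to the exponents, `∑ c_β [β] ↦ ∑ σ(c_β) [σ(β)]`. -/
noncomputable def twist (σ : R ≃ₐ[K] R) : R[R] →+* R[R] :=
  (mapDomainRingHom R (σ : R →+ R)).comp (mapRingHom R (σ : R →+* R))

lemma twist_single (σ : R ≃ₐ[K] R) (x c : R) : twist σ (single x c) = single (σ x) (σ c) := by
  simp [twist]

lemma coeff_twist_apply (σ : R ≃ₐ[K] R) (f : R[R]) (x : R) :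
    (twist σ f).coeff (σ x) = σ (f.coeff x) := by
  simp [twist, Finsupp.mapDomain_apply σ.injective]

lemma twist_one (f : R[R]) : twist (1 : R ≃ₐ[K] R) f = f := by
  ext x
  exact coeff_twist_apply 1 f x

lemma twist_mul (σ τ : R ≃ₐ[K] R) (f : R[R]) : twist (σ * τ) f = twist σ (twist τ f) := by
  induction f using AddMonoidAlgebra.induction_linear with
  | zero => simp only [map_zero]
  | add f g hf hg => simp only [map_add, hf, hg]
  | single x c => simp only [twist_single, AlgEquiv.mul_apply]

lemma twist_injective (σ : R ≃ₐ[K] R) : Function.Injective (twist σ) :=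
  Function.LeftInverse.injective (g := twist σ⁻¹) fun f => by
    rw [← twist_mul, inv_mul_cancel, twist_one]

lemma apply_coeff_of_twist_eq {σ : R ≃ₐ[K] R} {f : R[R]} (hf : twist σ f = f) (x : R) :
    σ (f.coeff x) = f.coeff (σ x) := by
  rw [← coeff_twist_apply, hf]

lemma apply_sum_support_erase_zero_of_twist_eq [DecidableEq R] {σ : R ≃ₐ[K] R} {f : R[R]}
    (hf : twist σ f = f) {φ : R → R} (hφ : ∀ x, σ (φ x) = φ (σ x)) :
    σ (∑ x ∈ f.coeff.support.erase 0, f.coeff x * φ x)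
      = ∑ x ∈ f.coeff.support.erase 0, f.coeff x * φ x := by
  rw [map_sum]
  refine Finset.sum_equiv σ.toEquiv (fun x => ?_) fun x _ => ?_
  · simp [← apply_coeff_of_twist_eq hf]
  · simp [apply_coeff_of_twist_eq hf, hφ]

lemma twist_sum_twist [Fintype (R ≃ₐ[K] R)] (τ : R ≃ₐ[K] R) (f : R[R]) :
    twist τ (∑ σ : R ≃ₐ[K] R, twist σ f) = ∑ σ : R ≃ₐ[K] R, twist σ f := by
  rw [map_sum]
  exact Fintype.sum_equiv (Equiv.mulLeft τ) _ _ fun σ => (twist_mul τ σ f).symm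

end Twist

lemma twist_prod_twist {K R : Type*} [CommSemiring K] [CommSemiring R] [Algebra K R]
    [Fintype (R ≃ₐ[K] R)] (τ : R ≃ₐ[K] R) (f : R[R]) :
    twist τ (∏ σ : R ≃ₐ[K] R, twist σ f) = ∏ σ : R ≃ₐ[K] R, twist σ f := by
  rw [map_prod]
  exact Fintype.prod_equiv (Equiv.mulLeft τ) _ _ fun σ => (twist_mul τ σ f).symm

lemma exists_twist_mul_eq_coeff_zero_ne_zero {K L : Type*} [CommSemiring K] [Field L] [CharZero L]
    [Algebra K L] [Finite (L ≃ₐ[K] L)] {f : L[L]} (hf : f ≠ 0) :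
    ∃ g : L[L], (f * g).coeff 0 ≠ 0 ∧ ∀ τ : L ≃ₐ[K] L, twist τ (f * g) = f * g := by
  cases nonempty_fintype (L ≃ₐ[K] L)
  let N : L[L] := ∏ σ : L ≃ₐ[K] L, twist σ f
  have hN_fixed (τ : L ≃ₐ[K] L) : twist τ N = N := twist_prod_twist τ f
  have hN : N ≠ 0 := Finset.prod_ne_zero_iff.2 fun σ _ =>
    (map_ne_zero_iff _ (twist_injective σ)).2 hf
  obtain ⟨β, hβ⟩ : ∃ β, N.coeff β ≠ 0 := by
    simpa [← coeff_eq_zero, DFunLike.ext_iff] using hN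
  let t : L[L] := single (-β) (N.coeff β)⁻¹
  let T : L[L] := ∑ σ : L ≃ₐ[K] L, twist σ t
  have hcoeff_twist (σ : L ≃ₐ[K] L) : (N * twist σ t).coeff 0 = 1 := by
    rw [twist_single, coeff_mul_single_apply, map_neg, neg_neg, zero_add, map_inv₀,
      ← apply_coeff_of_twist_eq (hN_fixed σ), mul_inv_cancel₀ ((map_ne_zero σ).2 hβ)]
  have hcoeff : (N * T).coeff 0 = Fintype.card (L ≃ₐ[K] L) := by
    simp [T, Finset.mul_sum, coeff_sum, Finsupp.finsetSum_apply, hcoeff_twist]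
  obtain ⟨q, hq⟩ : f ∣ N := by
    simpa only [twist_one] using Finset.dvd_prod_of_mem (twist · f)
      (Finset.mem_univ (1 : L ≃ₐ[K] L))
  refine ⟨q * T, ?_, fun τ => ?_⟩
  · rw [← mul_assoc, ← hq, hcoeff]
    exact_mod_cast Fintype.card_ne_zero
  · rw [← mul_assoc, ← hq, map_mul, hN_fixed, twist_sum_twist]

section ExpEval

variable {L : Type*}

/-- The value `∑ ι(c_β) exp(ι(β))` of the formal exponential sum `∑ c_β [β]`, as a ring
homomorphism in the sum. -/
noncomputable def expEval [Semiring L] (ι : L →+* ℂ) : L[L] →+* ℂ :=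
  liftNCRingHom ι (Complex.expMonoidHom.comp (AddMonoidHom.toMultiplicative (ι : L →+ ℂ)))
    fun _ _ => Commute.all _ _

lemma expEval_single [Semiring L] (ι : L →+* ℂ) (x c : L) :
    expEval ι (single x c) = ι c * Complex.exp (ι x) :=
  liftNCRingHom_single ..

lemma expEval_apply [Semiring L] (ι : L →+* ℂ) (f : L[L]) :
    expEval ι f = ∑ x ∈ f.coeff.support, ι (f.coeff x) * Complex.exp (ι x) := by
  conv_lhs => rw [← sum_coeff_single f, Finsupp.sum, map_sum]
  simp only [expEval_single]

lemma expEval_eq_add_sum_erase_zero [Semiring L] [DecidableEq L] (ι : L →+* ℂ) (f : L[L]) :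
    expEval ι f = ι (f.coeff 0)
      + ∑ x ∈ f.coeff.support.erase 0, ι (f.coeff x) * Complex.exp (ι x) := by
  rw [expEval_apply]
  by_cases h0 : (0 : L) ∈ f.coeff.support
  · rw [← Finset.add_sum_erase _ _ h0, map_zero ι, Complex.exp_zero, mul_one]
  · rw [Finset.erase_eq_of_notMem h0, Finsupp.notMem_support_iff.1 h0, map_zero, zero_add]

variable [Field L] [Algebra ℚ L] [IsGalois ℚ L]

lemma exists_intCast_eq_coeff_zero {f : L[L]} (hfix : ∀ σ : Gal(L/ℚ), twist σ f = f)
    (hint : IsIntegral ℤ (f.coeff 0)) : ∃ c : ℤ, (c : L) = f.coeff 0 :=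
  exists_algebraMap_eq_of_isIntegral_of_fixed (K := ℚ) hint fun σ => by
    rw [apply_coeff_of_twist_eq (hfix σ), map_zero]

open Polynomial in
lemma exists_intCast_eq_sum_smul_aeval [DecidableEq L] {f : L[L]}
    (hfix : ∀ σ : Gal(L/ℚ), twist σ f = f) (hint : ∀ x, IsIntegral ℤ (f.coeff x)) {d : ℤ}
    (hd : ∀ x ∈ f.coeff.support.erase 0, IsIntegral ℤ (d • x)) {g : ℤ[X]} {m : ℕ}
    (hm : g.natDegree ≤ m) :
    ∃ W : ℤ, (W : L) = ∑ x ∈ f.coeff.support.erase 0, f.coeff x * (d ^ m • aeval x g) := by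
  refine exists_algebraMap_eq_of_isIntegral_of_fixed (K := ℚ) ?_ fun σ => ?_
  · exact IsIntegral.sum _ fun x hx => (hint x).mul (isIntegral_pow_smul_aeval (hd x hx) hm)
  · refine apply_sum_support_erase_zero_of_twist_eq (hfix σ) (φ := fun x => d ^ m • aeval x g)
      fun x => ?_
    rw [map_zsmul]
    exact congrArg (d ^ m • ·) (map_aeval_int (σ : L →+* L) x g)

theorem expEval_ne_zero_of_isIntegral_coeff (ι : L →+* ℂ) {f : L[L]}
    (hfix : ∀ σ : Gal(L/ℚ), twist σ f = f) (hint : ∀ x, IsIntegral ℤ (f.coeff x))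
    (h0 : f.coeff 0 ≠ 0) : expEval ι f ≠ 0 := by
  classical
  intro hzero
  have : Algebra.IsAlgebraic ℤ L :=
    (IsFractionRing.comap_isAlgebraic_iff (K := ℚ)).2 inferInstance
  let s : Finset L := f.coeff.support.erase 0
  obtain ⟨c, hc⟩ := exists_intCast_eq_coeff_zero hfix (hint 0)
  have hc0 : c ≠ 0 := by
    rintro rfl
    exact h0 (by rw [← hc, Int.cast_zero])
  obtain ⟨d, hd0, hd⟩ := Algebra.IsAlgebraic.exists_integral_multiples ℤ s
  obtain ⟨P, hP0, hP⟩ := exists_coeff_zero_ne_zero_forall_aeval_eq_zero (R := ℤ) s fun x hx =>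
    mem_nonZeroDivisors_of_ne_zero (Finset.ne_of_mem_erase hx)
  obtain ⟨p, hp, hpN, n, hn, g, m, hm, happrox⟩ :=
    exists_exp_approx_lt hP0 d (ε := 1 / ((∑ x ∈ s, ‖ι (f.coeff x)‖) + 1)) (by positivity)
      (c.natAbs + d.natAbs)
  obtain ⟨W, hW⟩ := exists_intCast_eq_sum_smul_aeval hfix hint hd hm
  let Z : ℤ := d ^ m * (n * c) + p * W
  have hZ_ne : Z ≠ 0 :=
    pow_mul_add_prime_mul_ne_zero hp hd0 (by omega) hc0 (by omega) hn m W
  let err (x : L) : ℂ := d ^ m * (n * Complex.exp (ι x) - p * Polynomial.aeval (ι x) g)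
  have hZ : (Z : ℂ) = -∑ x ∈ s, ι (f.coeff x) * err x := by
    have hc' : (c : ℂ) = -∑ x ∈ s, ι (f.coeff x) * Complex.exp (ι x) := by
      rw [eq_neg_iff_add_eq_zero, ← hzero, expEval_eq_add_sum_erase_zero, ← hc, map_intCast]
    have hW' : (W : ℂ) = ∑ x ∈ s, ι (f.coeff x) * (d ^ m * Polynomial.aeval (ι x) g) := by
      simpa [map_aeval_int] using congrArg ι hW
    simp only [Z, err, Int.cast_add, Int.cast_mul, Int.cast_pow, Int.cast_natCast, hc', hW',
      mul_neg, Finset.mul_sum, ← Finset.sum_neg_distrib, ← Finset.sum_add_distrib]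
    exact Finset.sum_congr rfl fun x _ => by ring
  have hZ_lt : ‖(Z : ℂ)‖ < 1 := by
    rw [hZ, norm_neg]
    refine norm_sum_mul_lt_one fun x hx =>
      (happrox _ (Polynomial.mem_aroots.2 ⟨?_, ?_⟩)).le
    · rintro rfl
      simp at hP0
    · rw [← map_aeval_int, hP x hx, map_zero]
  rw [Complex.norm_intCast] at hZ_lt
  exact absurd (Int.one_le_abs hZ_ne) (not_le.2 (by exact_mod_cast hZ_lt))

theorem expEval_ne_zero_of_twist_eq (ι : L →+* ℂ) {f : L[L]}
    (hfix : ∀ σ : Gal(L/ℚ), twist σ f = f) (h0 : f.coeff 0 ≠ 0) : expEval ι f ≠ 0 := by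
  classical
  have : CharZero L := algebraRat.charZero L
  have : Algebra.IsAlgebraic ℤ L :=
    (IsFractionRing.comap_isAlgebraic_iff (K := ℚ)).2 inferInstance
  obtain ⟨d, hd, hint⟩ :=
    Algebra.IsAlgebraic.exists_integral_multiples ℤ (f.coeff.support.image f.coeff)
  have hdf : expEval ι (d • f) ≠ 0 := by
    refine expEval_ne_zero_of_isIntegral_coeff ι (fun σ => ?_) (fun x => ?_) ?_
    · rw [map_zsmul, hfix]
    · by_cases hx : f.coeff x = 0
      · rw [coeff_smul_apply, hx, smul_zero]
        exact isIntegral_zero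
      · exact hint _ (Finset.mem_image_of_mem _ (Finsupp.mem_support_iff.2 hx))
    · exact smul_ne_zero hd h0
  intro hzero
  rw [map_zsmul, hzero, smul_zero] at hdf
  exact hdf rfl

theorem expEval_injective [FiniteDimensional ℚ L] (ι : L →+* ℂ) :
    Function.Injective (expEval ι) := by
  have : CharZero L := algebraRat.charZero L
  refine (injective_iff_map_eq_zero _).2 fun f hzero => ?_
  by_contra hf
  obtain ⟨g, h0, hfix⟩ := exists_twist_mul_eq_coeff_zero_ne_zero (K := ℚ) hf
  exact expEval_ne_zero_of_twist_eq ι hfix h0 (by rw [map_mul, hzero, zero_mul])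

end ExpEval

theorem transcendental_exp {a : ℂ} (ha : IsAlgebraic ℚ a) (ha0 : a ≠ 0) :
    Transcendental ℚ (Complex.exp a) := by
  intro hexp
  let E := IntermediateField.adjoin ℚ {a, Complex.exp a}
  have : FiniteDimensional ℚ E :=
    IntermediateField.finiteDimensional_adjoin_pair ha.isIntegral hexp.isIntegral
  let L := IntermediateField.normalClosure ℚ E ℂ
  have : IsNormalClosure ℚ E L :=
    Algebra.IsAlgebraic.isNormalClosure_normalClosure fun _ => IsAlgClosed.splits _
  have : Normal ℚ L := IsNormalClosure.normal (K := E)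
  have : IsGalois ℚ L := ⟨⟩
  have hEL : {a, Complex.exp a} ⊆ (L : Set ℂ) :=
    (IntermediateField.subset_adjoin ℚ _).trans E.le_normalClosure
  let α : L := ⟨a, hEL (by simp)⟩
  let β : L := ⟨Complex.exp a, hEL (by simp)⟩
  have heq : single α 1 = single 0 β := expEval_injective (algebraMap L ℂ) <| by
    simp [expEval_single, α, β]
  rcases single_inj.1 heq with ⟨hα, -⟩ | ⟨hone, -⟩
  · exact ha0 (congrArg Subtype.val hα)
  · exact one_ne_zero hone

theorem transcendental_log {x : ℝ} (hx : IsAlgebraic ℚ x) (hx_pos : 0 < x) (hx_one : x ≠ 1) :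
    Transcendental ℚ (Real.log x) := by
  intro hlog
  refine transcendental_exp (a := Real.log x) (hlog.algebraMap (A := ℂ)) ?_ ?_
  · exact_mod_cast Real.log_ne_zero_of_pos_of_ne_one hx_pos hx_one
  · rw [← Complex.ofReal_exp, Real.exp_log hx_pos]
    exact hx.algebraMap

lemma isAlgebraic_rpow_ratCast {x : ℝ} (hx : IsAlgebraic ℚ x) (hx_nonneg : 0 ≤ x) (r : ℚ) :
    IsAlgebraic ℚ (x ^ (r : ℝ)) := by
  refine IsAlgebraic.of_pow r.den_pos ?_
  have hpow : (x ^ (r : ℝ)) ^ r.den = x ^ r.num := by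
    rw [← Real.rpow_natCast, ← Real.rpow_mul hx_nonneg, ← Real.rpow_intCast]
    congr 1
    exact_mod_cast r.mul_den_eq_num
  rw [hpow]
  exact mem_algebraicClosure_iff.1 (zpow_mem (mem_algebraicClosure_iff.2 hx) _)

theorem no_solution_eq3_general {u v : ℝ} (hu : IsAlgebraic ℚ u) (hu_nonneg : 0 ≤ u)
    (hv : IsAlgebraic ℚ v) (hv_pos : 0 < v) (r : ℚ) : u ^ (r : ℝ) * Real.log v ≠ 1 := by
  intro h
  have hv_one : v ≠ 1 := by
    rintro rfl
    simp at h
  refine transcendental_log hv hv_pos hv_one ?_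
  rw [eq_inv_of_mul_eq_one_right h]
  exact (isAlgebraic_rpow_ratCast hu hu_nonneg r).inv

/-- Equation (3) of the paper has no solutions in positive naturals:
`(m₂/n₂) ^ (m₃/n₃) * log (m₁/n₁) = 1` is impossible. -/
theorem no_solution_eq3 :
    ¬ ∃ m₁ n₁ m₂ n₂ m₃ n₃ : ℕ, 0 < m₁ ∧ 0 < n₁ ∧ 0 < m₂ ∧ 0 < n₂ ∧ 0 < m₃ ∧ 0 < n₃ ∧
      ((m₂ : ℝ) / (n₂ : ℝ)) ^ ((m₃ : ℝ) / (n₃ : ℝ)) *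
        Real.log ((m₁ : ℝ) / (n₁ : ℝ)) = 1 := by
  rintro ⟨m₁, n₁, m₂, n₂, m₃, n₃, hm₁, hn₁, hm₂, hn₂, -, -, h⟩
  have hdiv (m n : ℕ) : IsAlgebraic ℚ ((m : ℝ) / n) :=
    (isAlgebraic_natCast m).mul (isAlgebraic_natCast n).inv
  exact no_solution_eq3_general (hdiv m₂ n₂) (by positivity) (hdiv m₁ n₁) (by positivity)
    (m₃ / n₃) (by push_cast; exact h)
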